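/- Let f(p) = Σ_{m=0}^∞ pᵐ aₘ be an entire power series with quaternionic coefficients satisfying Σ_{m=0}^∞ m! |aₘ|² < ∞, and for q ∈ ℍ let k_q(p) = Σ_{n=0}^∞ pⁿ q̄ⁿ / n!. Then for every imaginary unit I ∈ 𝕊 and every q ∈ ℍ, ⟨f, k_q⟩_I = f(q); that is, k_q is a reproducing kernel for the slice hyperholomorphic quaternionic Fock space. -/

import Mathlib

open MeasureTheory Real Nat

noncomputable section

local notation "ℍ" => Quaternion ℝ

/-- The sphere of quaternionic imaginary units. -/
def quatSphere : Set ℍ := {q | q.re = 0 ∧ ‖q‖ = 1}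

/-- The point `x + y I` of the slice `ℂ_I`. -/
def sliceVal (I : ℍ) (z : ℝ × ℝ) : ℍ := ((z.1 : ℍ)) + ((z.2 : ℍ)) * I

/-- The Fock inner product `⟨f, g⟩_I = (1/π) ∫ e^{-(x²+y²)} conj(g(x+yI)) f(x+yI) dx dy`. -/
def fockInner (I : ℍ) (f g : ℍ → ℍ) : ℍ :=
  π⁻¹ • ∫ z : ℝ × ℝ,
    Real.exp (-(z.1 ^ 2 + z.2 ^ 2)) • (star (g (sliceVal I z)) * f (sliceVal I z))

/-- The reproducing kernel `k_q(p) = e_⋆^{p q̄} = Σ pⁿ q̄ⁿ / n!`. -/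
def fockKernel (q : ℍ) : ℍ → ℍ := fun p => ∑' n : ℕ, ((n ! : ℝ)⁻¹) • (p ^ n * (star q) ^ n)

lemma fk_norm_int (k : ℕ) :
    ∫ z : ℂ, ‖z‖ ^ k * Real.exp (-‖z‖ ^ 2) = π * Real.Gamma (((k : ℝ) + 2) / 2) := by
  have h := Complex.integral_rpow_mul_exp_neg_rpow (p := 2) (q := (k : ℝ)) (by norm_num)
    (by have : (0 : ℝ) ≤ k := Nat.cast_nonneg k
        linarith)
  have h2 : ∀ x : ℝ, x ^ (2 : ℝ) = x ^ 2 := fun x => by exact_mod_cast Real.rpow_natCast x 2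
  simp only [Real.rpow_natCast, h2] at h
  rw [h]
  congr 1
  ring

lemma fk_norm_integrable (k : ℕ) :
    Integrable (fun z : ℂ => ‖z‖ ^ k * Real.exp (-‖z‖ ^ 2)) := by
  apply Integrable.of_integral_ne_zero
  rw [fk_norm_int]
  have : 0 < Real.Gamma (((k : ℝ) + 2) / 2) := Real.Gamma_pos_of_pos (by positivity)
  positivity

lemma fk_integrable (n m : ℕ) :
    Integrable (fun z : ℂ => Real.exp (-‖z‖ ^ 2) • ((starRingEnd ℂ z) ^ n * z ^ m)) := by
  refine (fk_norm_integrable (n + m)).mono' (Continuous.aestronglyMeasurable (by fun_prop)) ?_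
  refine Filter.Eventually.of_forall fun z => le_of_eq ?_
  rw [norm_smul, norm_mul, norm_pow, norm_pow, RCLike.norm_conj, Real.norm_eq_abs,
    abs_of_pos (Real.exp_pos _)]
  ring

lemma fk_diag (n : ℕ) :
    ∫ z : ℂ, Real.exp (-‖z‖ ^ 2) • ((starRingEnd ℂ z) ^ n * z ^ n) = ((π * n ! : ℝ) : ℂ) := by
  have h : ∀ z : ℂ, Real.exp (-‖z‖ ^ 2) • ((starRingEnd ℂ z) ^ n * z ^ n)
      = ((‖z‖ ^ (2 * n) * Real.exp (-‖z‖ ^ 2) : ℝ) : ℂ) := by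
    intro z
    rw [← mul_pow, mul_comm (starRingEnd ℂ z), Complex.mul_conj, Complex.normSq_eq_norm_sq,
      Complex.real_smul]
    push_cast
    ring
  simp_rw [h]
  rw [integral_complex_ofReal, fk_norm_int, ← Real.Gamma_nat_eq_factorial]
  congr 3
  push_cast
  ring

lemma fk_off (n m : ℕ) (hnm : n ≠ m) :
    ∫ z : ℂ, Real.exp (-‖z‖ ^ 2) • ((starRingEnd ℂ z) ^ n * z ^ m) = 0 := by
  set u : Circle := Circle.exp (π / ((m : ℝ) - n)) with hu
  have hne : (m : ℝ) - n ≠ 0 := sub_ne_zero.2 (by exact_mod_cast hnm.symm)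
  have hne' : (m : ℂ) - n ≠ 0 := sub_ne_zero.2 (by exact_mod_cast hnm.symm)
  have huu : (starRingEnd ℂ (u : ℂ)) ^ n * (u : ℂ) ^ m = -1 := by
    rw [hu, Circle.coe_exp, ← Complex.exp_conj, ← Complex.exp_nat_mul, ← Complex.exp_nat_mul,
      ← Complex.exp_add, ← Complex.exp_pi_mul_I]
    congr 1
    rw [map_mul, Complex.conj_ofReal, Complex.conj_I]
    push_cast
    field_simp
    ring
  have hmp := (rotation u).measurePreserving
  have h := hmp.integral_comp (rotation u).toHomeomorph.measurableEmbedding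
    (fun z : ℂ => Real.exp (-‖z‖ ^ 2) • ((starRingEnd ℂ z) ^ n * z ^ m))
  have h2 : ∀ z : ℂ, Real.exp (-‖rotation u z‖ ^ 2) •
      ((starRingEnd ℂ (rotation u z)) ^ n * (rotation u z) ^ m)
      = - (Real.exp (-‖z‖ ^ 2) • ((starRingEnd ℂ z) ^ n * z ^ m)) := by
    intro z
    rw [LinearIsometryEquiv.norm_map, rotation_apply, map_mul, mul_pow, mul_pow, ← smul_neg]
    congr 1
    linear_combination (starRingEnd ℂ z) ^ n * z ^ m * huu
  simp_rw [h2] at h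
  rw [integral_neg] at h
  exact self_eq_neg.1 h.symm

lemma fk_II {I : ℍ} (hI : I ∈ quatSphere) : I * I = -1 := by
  obtain ⟨h0, h1⟩ := hI
  have h2 : star I = -I := by
    ext <;> simp [h0]
  have h3 := Quaternion.self_mul_star I
  rw [h2, Quaternion.normSq_eq_norm_mul_self, h1] at h3
  simp only [mul_neg, mul_one, Quaternion.coe_one] at h3
  rw [← h3, neg_neg]

lemma fk_slice {I : ℍ} (hI : I ∈ quatSphere) (z : ℂ) :
    sliceVal I (z.re, z.im) = Complex.liftAux I (fk_II hI) z := by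
  rw [Complex.liftAux_apply, sliceVal, Quaternion.coe_mul_eq_smul]
  rfl

lemma fk_slice_star {I : ℍ} (hI : I ∈ quatSphere) (z : ℂ) :
    star (sliceVal I (z.re, z.im)) = Complex.liftAux I (fk_II hI) (starRingEnd ℂ z) := by
  rw [← fk_slice hI]
  obtain ⟨h0, h1⟩ := hI
  ext <;> simp [sliceVal, h0, mul_comm]

lemma fk_slice_norm {I : ℍ} (hI : I ∈ quatSphere) (z : ℂ) :
    ‖sliceVal I (z.re, z.im)‖ = ‖z‖ := by
  have h : ‖sliceVal I (z.re, z.im)‖ ^ 2 = ‖z‖ ^ 2 := by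
    have := Quaternion.self_mul_star (sliceVal I (z.re, z.im))
    rw [fk_slice_star hI, fk_slice hI, ← map_mul, Complex.mul_conj, Complex.normSq_eq_norm_sq,
      Quaternion.normSq_eq_norm_mul_self, ← sq] at this
    have h3 : Complex.liftAux I (fk_II hI) ((‖z‖ ^ 2 : ℝ) : ℂ) = ((‖z‖ ^ 2 : ℝ) : ℍ) := by
      rw [Complex.liftAux_apply, Complex.ofReal_re, Complex.ofReal_im, zero_smul, add_zero]; rfl
    rw [h3] at this
    rw [fk_slice hI]
    exact (Quaternion.coe_injective this).symm
  exact (sq_eq_sq₀ (norm_nonneg _) (norm_nonneg _)).1 h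

lemma fk_term {I : ℍ} (hI : I ∈ quatSphere) (b c : ℍ) (n m : ℕ) :
    ∫ z : ℂ, Real.exp (-‖z‖ ^ 2) •
      (b * star (sliceVal I (z.re, z.im)) ^ n * (sliceVal I (z.re, z.im) ^ m * c))
      = if n = m then (π * n ! : ℝ) • (b * c) else 0 := by
  let ψ := (Complex.liftAux I (fk_II hI)).toLinearMap
  let L : ℂ →L[ℝ] ℍ := LinearMap.toContinuousLinearMap
    ((LinearMap.mulRight ℝ c).comp ((LinearMap.mulLeft ℝ b).comp ψ))
  have hL : ∀ w, L w = b * Complex.liftAux I (fk_II hI) w * c := fun w => rfl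
  have h : ∀ z : ℂ, Real.exp (-‖z‖ ^ 2) •
      (b * star (sliceVal I (z.re, z.im)) ^ n * (sliceVal I (z.re, z.im) ^ m * c))
      = L (Real.exp (-‖z‖ ^ 2) • ((starRingEnd ℂ z) ^ n * z ^ m)) := by
    intro z
    rw [map_smul, hL, map_mul, map_pow, map_pow, fk_slice_star hI, fk_slice hI]
    simp only [mul_assoc]
  simp_rw [h]
  rw [L.integral_comp_comm (fk_integrable n m)]
  split_ifs with hnm
  · subst hnm
    rw [fk_diag, hL]
    have h3 : Complex.liftAux I (fk_II hI) ((π * n ! : ℝ) : ℂ) = ((π * n ! : ℝ) : ℍ) := by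
      rw [Complex.liftAux_apply, Complex.ofReal_re, Complex.ofReal_im, zero_smul, add_zero]; rfl
    rw [h3, Quaternion.mul_coe_eq_smul, smul_mul_assoc]
  · rw [fk_off n m hnm, map_zero]

lemma fk_exp_hasSum (x : ℝ) : HasSum (fun n : ℕ => x ^ n / n !) (Real.exp x) := by
  have := NormedSpace.expSeries_div_hasSum_exp x
  rwa [← Real.exp_eq_exp_ℝ] at this

/-- dominating function -/
def fkBound (Q : ℝ) (a : ℕ → ℍ) (r : ℝ) (p : ℕ × ℕ) : ℝ :=
  (Real.exp (-r ^ 2) * ((Q * r) ^ p.1 / p.1 !)) *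
    (2⁻¹ * (Real.exp (r ^ 2 / 2) * (p.2 ! * ‖a p.2‖ ^ 2)
      + Real.exp (-(r ^ 2 / 2)) * ((r ^ 2) ^ p.2 / p.2 !)))

lemma fkBound_hasSum (Q : ℝ) (hQ : 0 ≤ Q) (a : ℕ → ℍ)
    (ha : Summable fun m : ℕ => (m ! : ℝ) * ‖a m‖ ^ 2) (r : ℝ) (hr : 0 ≤ r) :
    HasSum (fkBound Q a r) ((Real.exp (-r ^ 2) * Real.exp (Q * r)) *
      (2⁻¹ * (Real.exp (r ^ 2 / 2) * (∑' m : ℕ, (m ! : ℝ) * ‖a m‖ ^ 2)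
      + Real.exp (-(r ^ 2 / 2)) * Real.exp (r ^ 2)))) := by
  have h1 := (fk_exp_hasSum (Q * r)).mul_left (Real.exp (-r ^ 2))
  have h2 := ((ha.hasSum.mul_left (Real.exp (r ^ 2 / 2))).add
    ((fk_exp_hasSum (r ^ 2)).mul_left (Real.exp (-(r ^ 2 / 2))))).mul_left 2⁻¹
  exact h1.mul h2 (h1.summable.mul_of_nonneg h2.summable (fun n => by positivity)
    (fun n => by positivity))

lemma fkBound_tsum_integrable (Q : ℝ) (hQ : 0 ≤ Q) (a : ℕ → ℍ)
    (ha : Summable fun m : ℕ => (m ! : ℝ) * ‖a m‖ ^ 2) :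
    Integrable (fun z : ℂ => ∑' p, fkBound Q a ‖z‖ p) := by
  simp_rw [fun z : ℂ => (fkBound_hasSum Q hQ a ha ‖z‖ (norm_nonneg z)).tsum_eq]
  set C := ∑' m : ℕ, (m ! : ℝ) * ‖a m‖ ^ 2 with hC
  have hC0 : 0 ≤ C := tsum_nonneg fun m => by positivity
  have hg : Integrable (fun z : ℂ => Real.exp (-(1/4) * ‖z‖ ^ 2)) := by
    apply Integrable.of_integral_ne_zero
    have h := Complex.integral_exp_neg_mul_rpow (p := 2) (b := 1/4) (by norm_num) (by norm_num)
    have h2 : ∀ x : ℝ, x ^ (2 : ℝ) = x ^ 2 := fun x => by exact_mod_cast Real.rpow_natCast x 2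
    simp only [h2] at h
    rw [h]
    have : 0 < Real.Gamma (2 / 2 + 1) := Real.Gamma_pos_of_pos (by norm_num)
    positivity
  refine (hg.const_mul (Real.exp (Q ^ 2) * (2⁻¹ * (C + 1)))).mono'
    (Continuous.aestronglyMeasurable (by fun_prop)) ?_
  refine Filter.Eventually.of_forall fun z => ?_
  rw [Real.norm_of_nonneg (by positivity)]
  set r := ‖z‖
  have e1 : Real.exp (-(r ^ 2 / 2)) * Real.exp (r ^ 2) = Real.exp (r ^ 2 / 2) := by
    rw [← Real.exp_add]; congr 1; ring
  have e2 : Real.exp (-r ^ 2) * Real.exp (Q * r) * Real.exp (r ^ 2 / 2)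
      ≤ Real.exp (Q ^ 2) * Real.exp (-(1/4) * r ^ 2) := by
    rw [← Real.exp_add, ← Real.exp_add, ← Real.exp_add]
    apply Real.exp_le_exp.2
    nlinarith [sq_nonneg (Q - r / 2)]
  rw [e1]
  calc _ = (Real.exp (-r ^ 2) * Real.exp (Q * r) * Real.exp (r ^ 2 / 2)) * (2⁻¹ * (C + 1)) := by
        ring
    _ ≤ (Real.exp (Q ^ 2) * Real.exp (-(1/4) * r ^ 2)) * (2⁻¹ * (C + 1)) := by gcongr
    _ = _ := by ring

lemma fk_amgm (x r : ℝ) (m : ℕ) :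
    r ^ m * x ≤ 2⁻¹ * (Real.exp (r ^ 2 / 2) * (m ! * x ^ 2)
      + Real.exp (-(r ^ 2 / 2)) * ((r ^ 2) ^ m / m !)) := by
  have hm : (0 : ℝ) < m ! := by exact_mod_cast Nat.factorial_pos m
  have hE := Real.exp_pos (r ^ 2 / 2)
  rw [Real.exp_neg]
  set E := Real.exp (r ^ 2 / 2)
  have key : 2⁻¹ * (E * (m ! * x ^ 2) + E⁻¹ * ((r ^ 2) ^ m / m !)) - r ^ m * x
      = 2⁻¹ * (E * m !) * (x - r ^ m / (E * m !)) ^ 2 := by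
    rw [← pow_mul, mul_comm 2 m, pow_mul]
    field_simp
    ring
  have : 0 ≤ 2⁻¹ * (E * m !) * (x - r ^ m / (E * m !)) ^ 2 := by positivity
  linarith

lemma fk_kernel_hasSum (q p : ℍ) :
    HasSum (fun n : ℕ => ((n ! : ℝ)⁻¹ • q ^ n) * star p ^ n) (star (fockKernel q p)) := by
  have hs : Summable (fun n : ℕ => ((n ! : ℝ)⁻¹) • (p ^ n * (star q) ^ n)) := by
    refine Summable.of_norm_bounded (fk_exp_hasSum (‖p‖ * ‖q‖)).summable fun n => le_of_eq ?_
    rw [norm_smul, norm_mul, norm_pow, norm_pow, Quaternion.norm_star, norm_inv,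
      Real.norm_of_nonneg (by positivity), mul_pow]
    ring
  have h := hs.hasSum.star
  refine h.congr_fun ?_
  intro n
  simp

theorem fockKernel_reproducing (f : ℍ → ℍ) (a : ℕ → ℍ)
    (hf : ∀ p : ℍ, HasSum (fun m : ℕ => p ^ m * a m) (f p))
    (ha : Summable fun m : ℕ => (m ! : ℝ) * ‖a m‖ ^ 2)
    (I : ℍ) (hI : I ∈ quatSphere) (q : ℍ) :
    fockInner I f (fockKernel q) = f q := by
  have hcont : Continuous fun z : ℂ => sliceVal I (z.re, z.im) := by
    simp_rw [fk_slice hI]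
    exact (Complex.liftAux I (fk_II hI)).toLinearMap.continuous_of_finiteDimensional
  have hle : ∀ (k : ℕ × ℕ) (z : ℂ), ‖Real.exp (-‖z‖ ^ 2) •
      (((k.1 ! : ℝ)⁻¹ • q ^ k.1) * star (sliceVal I (z.re, z.im)) ^ k.1 *
        (sliceVal I (z.re, z.im) ^ k.2 * a k.2))‖ ≤ fkBound ‖q‖ a ‖z‖ k := by
    intro k z
    rw [norm_smul, norm_mul, norm_mul, norm_mul, norm_smul, norm_pow, norm_pow, norm_pow,
      Quaternion.norm_star, fk_slice_norm hI, Real.norm_of_nonneg (Real.exp_pos _).le,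
      norm_inv, Real.norm_of_nonneg (by positivity : (0:ℝ) ≤ k.1 !), fkBound]
    calc _ = (Real.exp (-‖z‖ ^ 2) * ((‖q‖ * ‖z‖) ^ k.1 / k.1 !)) * (‖z‖ ^ k.2 * ‖a k.2‖) := by
          rw [mul_pow]; ring
      _ ≤ _ := mul_le_mul_of_nonneg_left (fk_amgm _ _ _) (by positivity)
  have hbs := fun z : ℂ => (fkBound_hasSum ‖q‖ (norm_nonneg q) a ha ‖z‖ (norm_nonneg z)).summable
  have main := hasSum_integral_of_dominated_convergence (μ := (volume : Measure ℂ))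
    (F := fun (k : ℕ × ℕ) (z : ℂ) => Real.exp (-‖z‖ ^ 2) •
      (((k.1 ! : ℝ)⁻¹ • q ^ k.1) * star (sliceVal I (z.re, z.im)) ^ k.1 *
        (sliceVal I (z.re, z.im) ^ k.2 * a k.2)))
    (f := fun z : ℂ => Real.exp (-‖z‖ ^ 2) • (star (fockKernel q (sliceVal I (z.re, z.im))) *
      f (sliceVal I (z.re, z.im))))
    (fun k z => fkBound ‖q‖ a ‖z‖ k)
    (fun k => Continuous.aestronglyMeasurable (by fun_prop))
    (fun k => Filter.Eventually.of_forall (hle k))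
    (Filter.Eventually.of_forall hbs)
    (fkBound_tsum_integrable ‖q‖ (norm_nonneg q) a ha)
    (Filter.Eventually.of_forall fun z => by
      have hs := Summable.of_norm_bounded (hbs z) (fun k => hle k z)
      have hs2 := hs.const_smul (Real.exp (-‖z‖ ^ 2))⁻¹
      simp only [inv_smul_smul₀ (Real.exp_pos _).ne'] at hs2
      exact ((fk_kernel_hasSum q (sliceVal I (z.re, z.im))).mul
        (hf (sliceVal I (z.re, z.im))) hs2).const_smul _)
  simp_rw [fk_term hI] at main
  have hinj : Function.Injective (fun n : ℕ => (n, n)) := fun x y h => (Prod.ext_iff.1 h).1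
  rw [← hinj.hasSum_iff] at main
  · have h2 : HasSum (fun n : ℕ => π • (q ^ n * a n)) (π • f q) := (hf q).const_smul π
    have h3 := main.unique (h2.congr_fun (fun n => by
      have : (n ! : ℝ) ≠ 0 := by exact_mod_cast Nat.factorial_ne_zero n
      simp only [Function.comp, if_true]
      rw [smul_mul_assoc, smul_smul, mul_assoc, mul_inv_cancel₀ this, mul_one]))
    have h4 := Complex.volume_preserving_equiv_real_prod.integral_comp
      Complex.measurableEquivRealProd.measurableEmbedding
      (fun z : ℝ × ℝ => Real.exp (-(z.1 ^ 2 + z.2 ^ 2)) •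
        (star (fockKernel q (sliceVal I z)) * f (sliceVal I z)))
    have h5 : ∀ z : ℂ, ‖z‖ ^ 2 = z.re ^ 2 + z.im ^ 2 := fun z => by
      rw [← Complex.normSq_eq_norm_sq, Complex.normSq_apply]; ring
    simp only [Complex.measurableEquivRealProd_apply, ← h5] at h4
    rw [fockInner, ← h4, h3, inv_smul_smul₀ Real.pi_ne_zero]
  · rintro ⟨n, m⟩ h
    rw [if_neg]
    intro hnm
    exact h ⟨n, Prod.ext rfl hnm⟩
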